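/- For every real r with 0 ≤ r < 1, the relative entropy between the Bernoulli pmf with success probability (1+r)/2 and the fair Bernoulli pmf (success probability 1/2) equals ((1−r)/2)·ln(1−r) + ((1+r)/2)·ln(1+r), and this quantity is at most r². -/

import Mathlib

/-!
Relative entropy is bounded by the `χ²`-divergence: apply `log x ≤ x - 1` to each ratio `g x / f x`
and sum, the linear terms cancelling because `g` and `f` have the same mass. Against the fair
Bernoulli pmf, the `χ²`-divergence of the Bernoulli pmf with success probability `(1 + r) / 2` is
exactly `r ^ 2`.
-/

theorem mul_log_div_le_sub_add_sq_div {a b : ℝ} (ha : 0 ≤ a) (hab : 0 < a → 0 < b) :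
    a * Real.log (a / b) ≤ (a - b) + (a - b) ^ 2 / b := by
  rcases ha.eq_or_lt with rfl | ha
  · simp [sq]
  · have hb : 0 < b := hab ha
    calc a * Real.log (a / b)
        ≤ a * (a / b - 1) :=
          mul_le_mul_of_nonneg_left (Real.log_le_sub_one_of_pos (div_pos ha hb)) ha.le
      _ = (a - b) + (a - b) ^ 2 / b := by
          field_simp
          ring

section Divergence

variable {α : Type*} [Fintype α]

/-- The relative entropy `D(g‖f)` of real-valued mass functions on a finite type. The convention
`0 ln 0 = 0` is built into the product; the value is meaningful when `f` is positive wherever `g`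
is. -/
noncomputable def relativeEntropy (g f : α → ℝ) : ℝ :=
  ∑ x, g x * Real.log (g x / f x)

/-- Pearson's `χ²`-divergence `χ²(g‖f)` of real-valued mass functions on a finite type, used as an
upper bound for the relative entropy. Points where `f` vanishes contribute `0`, which is meaningful
when `g` vanishes there too. -/
noncomputable def chiSquareDivergence (g f : α → ℝ) : ℝ :=
  ∑ x, (g x - f x) ^ 2 / f x

theorem relativeEntropy_le_chiSquareDivergence {g f : α → ℝ} (hg : ∀ x, 0 ≤ g x)
    (hgf : ∀ x, 0 < g x → 0 < f x) (hsum : ∑ x, g x = ∑ x, f x) :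
    relativeEntropy g f ≤ chiSquareDivergence g f :=
  calc relativeEntropy g f
      ≤ ∑ x, ((g x - f x) + (g x - f x) ^ 2 / f x) :=
        Finset.sum_le_sum fun x _ => mul_log_div_le_sub_add_sq_div (hg x) (hgf x)
    _ = chiSquareDivergence g f := by
        rw [Finset.sum_add_distrib, Finset.sum_sub_distrib, hsum, sub_self, zero_add,
          chiSquareDivergence]

end Divergence

/-- The Bernoulli mass function with success probability `q`, real-valued on `Bool` with `true` as
success; it is a probability mass function when `0 ≤ q ≤ 1`. -/
def bernoulliMass (q : ℝ) (b : Bool) : ℝ :=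
  if b then q else 1 - q

section Bernoulli

variable {p q : ℝ}

theorem sum_bernoulliMass (q : ℝ) : ∑ b, bernoulliMass q b = 1 := by
  simp [bernoulliMass]

theorem bernoulliMass_nonneg (hq₀ : 0 ≤ q) (hq₁ : q ≤ 1) (b : Bool) : 0 ≤ bernoulliMass q b := by
  cases b
  · exact sub_nonneg.mpr hq₁
  · exact hq₀

theorem bernoulliMass_pos (hq₀ : 0 < q) (hq₁ : q < 1) (b : Bool) : 0 < bernoulliMass q b := by
  cases b
  · exact sub_pos.mpr hq₁
  · exact hq₀

theorem chiSquareDivergence_bernoulliMass (hq₀ : q ≠ 0) (hq₁ : q ≠ 1) :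
    chiSquareDivergence (bernoulliMass p) (bernoulliMass q) = (p - q) ^ 2 / (q * (1 - q)) := by
  have hq₁' : 1 - q ≠ 0 := sub_ne_zero.mpr hq₁.symm
  simp only [chiSquareDivergence, bernoulliMass, Fintype.sum_bool, if_true, Bool.false_eq_true,
    if_false]
  field_simp
  ring

theorem relativeEntropy_bernoulliMass_le (hp₀ : 0 ≤ p) (hp₁ : p ≤ 1) (hq₀ : 0 < q) (hq₁ : q < 1) :
    relativeEntropy (bernoulliMass p) (bernoulliMass q) ≤ (p - q) ^ 2 / (q * (1 - q)) :=
  calc relativeEntropy (bernoulliMass p) (bernoulliMass q)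
      ≤ chiSquareDivergence (bernoulliMass p) (bernoulliMass q) :=
        relativeEntropy_le_chiSquareDivergence (bernoulliMass_nonneg hp₀ hp₁)
          (fun b _ => bernoulliMass_pos hq₀ hq₁ b)
          ((sum_bernoulliMass p).trans (sum_bernoulliMass q).symm)
    _ = (p - q) ^ 2 / (q * (1 - q)) := chiSquareDivergence_bernoulliMass hq₀.ne' hq₁.ne

theorem relativeEntropy_bernoulliMass_half (r : ℝ) :
    relativeEntropy (bernoulliMass ((1 + r) / 2)) (bernoulliMass (1 / 2)) =
      ((1 - r) / 2) * Real.log (1 - r) + ((1 + r) / 2) * Real.log (1 + r) := by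
  have failure_mass : 1 - (1 + r) / 2 = (1 - r) / 2 := by ring
  have success_ratio : (1 + r) / 2 / (1 / 2) = 1 + r := by ring
  have failure_ratio : (1 - r) / 2 / (1 - 1 / 2) = 1 - r := by ring
  simp only [relativeEntropy, bernoulliMass, Fintype.sum_bool, if_true, Bool.false_eq_true,
    if_false, failure_mass, success_ratio, failure_ratio]
  exact add_comm _ _

end Bernoulli

theorem bernoulli_relativeEntropy_eq_and_le_general (r : ℝ) (hr : |r| ≤ 1) :
    (∑ b : Bool,
        (if b then (1 + r) / 2 else (1 - r) / 2)
          * Real.log ((if b then (1 + r) / 2 else (1 - r) / 2) / (1 / 2))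
      = ((1 - r) / 2) * Real.log (1 - r) + ((1 + r) / 2) * Real.log (1 + r)) ∧
    ((1 - r) / 2) * Real.log (1 - r) + ((1 + r) / 2) * Real.log (1 + r) ≤ r ^ 2 := by
  obtain ⟨hr₀, hr₁⟩ := abs_le.mp hr
  have mass_eq (b : Bool) :
      (if b then (1 + r) / 2 else (1 - r) / 2) = bernoulliMass ((1 + r) / 2) b := by
    cases b <;> simp only [bernoulliMass, if_true, Bool.false_eq_true, if_false]
    ring
  have fair_eq (b : Bool) : (1 / 2 : ℝ) = bernoulliMass (1 / 2) b := by
    cases b <;> norm_num [bernoulliMass]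
  rw [← relativeEntropy_bernoulliMass_half]
  constructor
  · exact Finset.sum_congr rfl fun b _ => by rw [mass_eq, ← fair_eq]
  · calc relativeEntropy (bernoulliMass ((1 + r) / 2)) (bernoulliMass (1 / 2))
        ≤ ((1 + r) / 2 - 1 / 2) ^ 2 / (1 / 2 * (1 - 1 / 2)) :=
          relativeEntropy_bernoulliMass_le (by linarith) (by linarith) (by norm_num) (by norm_num)
      _ = r ^ 2 := by ring

/-- For `0 ≤ r < 1`, the relative entropy between the Bernoulli pmf with success
probability `(1+r)/2` and the fair Bernoulli pmf equals
`((1-r)/2) ln(1-r) + ((1+r)/2) ln(1+r)`, and this quantity is at most `r²`. -/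
theorem bernoulli_relativeEntropy_eq_and_le
    (r : ℝ) (h0 : 0 ≤ r) (h1 : r < 1) :
    (∑ b : Bool,
        (if b then (1 + r) / 2 else (1 - r) / 2)
          * Real.log ((if b then (1 + r) / 2 else (1 - r) / 2) / (1 / 2))
      = ((1 - r) / 2) * Real.log (1 - r) + ((1 + r) / 2) * Real.log (1 + r)) ∧
    ((1 - r) / 2) * Real.log (1 - r) + ((1 + r) / 2) * Real.log (1 + r) ≤ r ^ 2 :=
  bernoulli_relativeEntropy_eq_and_le_general r ((abs_of_nonneg h0).trans_le h1.le)
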